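/- For all positive integers k, ℓ and all real x, both p_{k,ℓ}(x) − 0.004·p'_{k,ℓ}(x) ≥ 0 and p_{k,ℓ}(x) + 0.004·p'_{k,ℓ}(x) ≥ 0, where p'_{k,ℓ} denotes the derivative of p_{k,ℓ}. -/

import Mathlib

open scoped BigOperators

/-- `taylorExp ℓ x = ∑_{k=0}^{ℓ} x^k/k!`, the degree-`ℓ` truncation of the Taylor
series of `e^x`. -/
noncomputable def taylorExp (ℓ : ℕ) (x : ℝ) : ℝ :=
  ∑ k ∈ Finset.range (ℓ + 1), x ^ k / (Nat.factorial k : ℝ)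

/-- `pkl k ℓ x = ∏_{j=1}^{k} s_{2^j ℓ}(x/k)`. -/
noncomputable def pkl (k ℓ : ℕ) (x : ℝ) : ℝ :=
  ∏ j ∈ Finset.Icc 1 k, taylorExp (2 ^ j * ℓ) (x / (k : ℝ))

/-!
Write `s_m = taylorExp m`. Logarithmic derivatives add over a product, and the inner
derivatives `1 / k` of its `k` factors sum to `1`, so it suffices to prove `|s_m'| ≤ c s_m` for
even `m`. Since `s_m' = s_m - y ^ m / m!`, this amounts to
`y ^ m / m! ≤ (c + 1) s_m(y)`, which is only delicate for `y < 0`. There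
`e⁻ʸ s_m(y)` has derivative `-e⁻ʸ y ^ m / m! ≤ 0`, whence `e ^ y ≤ s_m(y)`. As soon as
`exp (1 + c⁻¹) ≤ c`, which holds for `c ≥ 3.592`, we have `y ^ m / m! ≤ e ^ y` on `[-m / c, 0]`,
and to the left of `-m / c` the function `e⁻ʸ ((c + 1) s_m(y) - y ^ m / m!)` is decreasing, so it
stays nonnegative there.
-/

open Real Set
open scoped Nat

section ExpNeg

lemma hasDerivAt_exp_neg_mul {f : ℝ → ℝ} {f' y : ℝ} (hf : HasDerivAt f f' y) :
    HasDerivAt (fun z ↦ exp (-z) * f z) (exp (-y) * (f' - f y)) y :=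
  ((hasDerivAt_neg y).exp.mul hf).congr_deriv (by ring)

lemma antitoneOn_Iic_exp_neg_mul {f f' : ℝ → ℝ} {b : ℝ} (hf : ∀ y, HasDerivAt f (f' y) y)
    (hf' : ∀ y < b, f' y ≤ f y) : AntitoneOn (fun y ↦ exp (-y) * f y) (Iic b) := by
  have hderiv (y : ℝ) := hasDerivAt_exp_neg_mul (hf y)
  refine antitoneOn_of_hasDerivWithinAt_nonpos (convex_Iic b)
    (fun y _ ↦ (hderiv y).continuousAt.continuousWithinAt)
    (fun y _ ↦ (hderiv y).hasDerivWithinAt) fun y hy ↦ ?_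
  rw [interior_Iic] at hy
  exact mul_nonpos_of_nonneg_of_nonpos (exp_pos _).le (sub_nonpos.2 (hf' y hy))

end ExpNeg

section ExpBound

variable {c : ℝ}

lemma pos_of_exp_one_add_inv_le (hc : exp (1 + c⁻¹) ≤ c) : 0 < c :=
  (exp_pos _).trans_le hc

lemma one_le_of_exp_one_add_inv_le (hc : exp (1 + c⁻¹) ≤ c) : 1 ≤ c := by
  have := inv_pos.2 (pos_of_exp_one_add_inv_le hc)
  exact (one_le_exp (by linarith)).trans hc

lemma pow_div_factorial_le_exp_neg {m : ℕ} {t : ℝ} (hc : exp (1 + c⁻¹) ≤ c) (ht : 0 ≤ t)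
    (htm : t ≤ m / c) : t ^ m / m ! ≤ exp (-t) := by
  have hc0 := pos_of_exp_one_add_inv_le hc
  calc t ^ m / m ! ≤ (m / c) ^ m / m ! := by gcongr
    _ = (m : ℝ) ^ m / m ! / c ^ m := by ring
    _ ≤ exp m / c ^ m := by
      gcongr
      exact pow_div_factorial_le_exp _ m.cast_nonneg m
    _ ≤ exp m / exp (1 + c⁻¹) ^ m := by gcongr
    _ = exp (-(m / c)) := by
      rw [← exp_nat_mul, ← exp_sub]
      congr 1
      ring
    _ ≤ exp (-t) := by gcongr

end ExpBound

section TaylorExp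

lemma taylorExp_succ (m : ℕ) (y : ℝ) :
    taylorExp (m + 1) y = taylorExp m y + y ^ (m + 1) / (m + 1)! :=
  Finset.sum_range_succ _ _

lemma taylorExp_zero_right (m : ℕ) : taylorExp m 0 = 1 := by
  simp [taylorExp, Finset.sum_range_succ']

lemma hasDerivAt_pow_div_factorial_succ (n : ℕ) (y : ℝ) :
    HasDerivAt (fun z : ℝ ↦ z ^ (n + 1) / (n + 1)!) (y ^ n / n !) y := by
  refine ((hasDerivAt_pow (n + 1) y).div_const _).congr_deriv ?_
  rw [Nat.factorial_succ, Nat.cast_mul, Nat.add_sub_cancel]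
  exact mul_div_mul_left _ _ (by positivity)

lemma hasDerivAt_taylorExp (m : ℕ) (y : ℝ) :
    HasDerivAt (taylorExp m) (taylorExp m y - y ^ m / m !) y := by
  induction m with
  | zero =>
    have hconst : taylorExp 0 = fun _ ↦ (1 : ℝ) := by
      funext z
      simp [taylorExp]
    simpa [hconst] using hasDerivAt_const y (1 : ℝ)
  | succ n ih =>
    rw [funext (taylorExp_succ n)]
    exact (ih.add (hasDerivAt_pow_div_factorial_succ n y)).congr_deriv (by ring)

lemma pow_div_factorial_le_taylorExp_of_nonneg (m : ℕ) {y : ℝ} (hy : 0 ≤ y) :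
    y ^ m / m ! ≤ taylorExp m y :=
  Finset.single_le_sum (f := fun k ↦ y ^ k / (k ! : ℝ)) (fun _ _ ↦ by positivity)
    (Finset.self_mem_range_succ m)

variable {m : ℕ} {y : ℝ}

lemma exp_le_taylorExp_of_nonpos (hm : Even m) (hy : y ≤ 0) : exp y ≤ taylorExp m y := by
  have hanti : AntitoneOn (fun z ↦ exp (-z) * taylorExp m z) (Iic 0) :=
    antitoneOn_Iic_exp_neg_mul (hasDerivAt_taylorExp m) fun z _ ↦
      sub_le_self _ (div_nonneg (hm.pow_nonneg z) (by positivity))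
  have hone : 1 ≤ exp (-y) * taylorExp m y := by
    simpa [taylorExp_zero_right] using hanti hy self_mem_Iic hy
  rwa [exp_neg, ← div_eq_inv_mul, one_le_div (exp_pos y)] at hone

lemma taylorExp_pos (hm : Even m) (y : ℝ) : 0 < taylorExp m y := by
  rcases le_total 0 y with hy | hy
  · exact Finset.sum_pos' (fun _ _ ↦ by positivity) ⟨0, by simp, by simp⟩
  · exact (exp_pos y).trans_le (exp_le_taylorExp_of_nonpos hm hy)

variable {c : ℝ}

lemma mul_pow_add_mul_pow_pred_nonneg (hm : Even m) (hc : 0 < c) (hy : y ≤ -(m / c)) :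
    0 ≤ c * y ^ m + m * y ^ (m - 1) := by
  rcases eq_or_ne m 0 with rfl | hm0
  · simpa using hc.le
  have hodd : Odd (m - 1) := Nat.Even.sub_odd (Nat.one_le_iff_ne_zero.2 hm0) hm odd_one
  have hy0 : y ≤ 0 := hy.trans (neg_nonpos.2 (by positivity))
  have hcy : c * y + m ≤ 0 := by
    rw [← neg_div, le_div_iff₀ hc] at hy
    linarith
  rw [← pow_sub_one_mul hm0 y]
  linarith [mul_nonneg_of_nonpos_of_nonpos (hodd.pow_nonpos hy0) hcy]

lemma antitoneOn_exp_neg_mul_taylorExp_sub (hm : Even m) (hc : 0 < c) :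
    AntitoneOn (fun y ↦ exp (-y) * ((c + 1) * taylorExp m y - y ^ m / m !))
      (Iic (-(m / c))) := by
  refine antitoneOn_Iic_exp_neg_mul (fun y ↦ ((hasDerivAt_taylorExp m y).const_mul (c + 1)).sub
    ((hasDerivAt_pow m y).div_const _)) fun y hy ↦ ?_
  have hnonneg : 0 ≤ (c * y ^ m + m * y ^ (m - 1)) / m ! :=
    div_nonneg (mul_pow_add_mul_pow_pred_nonneg hm hc hy.le) (by positivity)
  rw [← sub_nonneg]
  exact hnonneg.trans_eq (by ring)

lemma pow_div_factorial_le_taylorExp_of_mem_Icc (hm : Even m) (hc : exp (1 + c⁻¹) ≤ c)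
    (hy : y ∈ Icc (-(m / c)) 0) : y ^ m / m ! ≤ taylorExp m y := by
  have hexp := pow_div_factorial_le_exp_neg hc (neg_nonneg.2 hy.2) (neg_le.1 hy.1)
  rw [hm.neg_pow, neg_neg] at hexp
  exact hexp.trans (exp_le_taylorExp_of_nonpos hm hy.2)

lemma pow_div_factorial_le_mul_taylorExp (hm : Even m) (hc : exp (1 + c⁻¹) ≤ c) (y : ℝ) :
    y ^ m / m ! ≤ (c + 1) * taylorExp m y := by
  have hc0 := pos_of_exp_one_add_inv_le hc
  have of_le {z : ℝ} (hz : z ^ m / m ! ≤ taylorExp m z) :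
      z ^ m / m ! ≤ (c + 1) * taylorExp m z :=
    hz.trans (le_mul_of_one_le_left (taylorExp_pos hm z).le (by linarith))
  rcases le_total 0 y with hy0 | hy0
  · exact of_le (pow_div_factorial_le_taylorExp_of_nonneg m hy0)
  rcases le_total (-(m / c)) y with hy | hy
  · exact of_le (pow_div_factorial_le_taylorExp_of_mem_Icc hm hc ⟨hy, hy0⟩)
  have hb : -(m / c) ∈ Icc (-(m / c)) 0 := left_mem_Icc.2 (neg_nonpos.2 (by positivity))
  have hgap := of_le (pow_div_factorial_le_taylorExp_of_mem_Icc hm hc hb)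
  have hanti := antitoneOn_exp_neg_mul_taylorExp_sub hm hc0 hy self_mem_Iic hy
  have hnonneg := (mul_nonneg (exp_pos _).le (sub_nonneg.2 hgap)).trans hanti
  exact sub_nonneg.1 (nonneg_of_mul_nonneg_right hnonneg (exp_pos _))

lemma abs_taylorExp_sub_le (hm : Even m) (hc : exp (1 + c⁻¹) ≤ c) (y : ℝ) :
    |taylorExp m y - y ^ m / m !| ≤ c * taylorExp m y := by
  have hpow : 0 ≤ y ^ m / m ! := div_nonneg (hm.pow_nonneg y) (by positivity)
  have hle := pow_div_factorial_le_mul_taylorExp hm hc y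
  have hmul := le_mul_of_one_le_left (taylorExp_pos hm y).le (one_le_of_exp_one_add_inv_le hc)
  rw [abs_le]
  constructor <;> linarith

end TaylorExp

section Prod

variable {ι : Type*} {s : Finset ι}

lemma abs_deriv_prod_le {f : ι → ℝ → ℝ} {f' C : ι → ℝ} {x : ℝ}
    (hf : ∀ i ∈ s, HasDerivAt (f i) (f' i) x) (hnonneg : ∀ i ∈ s, 0 ≤ f i x)
    (hf' : ∀ i ∈ s, |f' i| ≤ C i * f i x) :
    |deriv (fun z ↦ ∏ i ∈ s, f i z) x| ≤ (∑ i ∈ s, C i) * ∏ i ∈ s, f i x := by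
  classical
  rw [(HasDerivAt.fun_finsetProd hf).deriv, Finset.sum_mul]
  refine (Finset.abs_sum_le_sum_abs _ _).trans (Finset.sum_le_sum fun i hi ↦ ?_)
  have herase : 0 ≤ ∏ j ∈ s.erase i, f j x :=
    Finset.prod_nonneg fun j hj ↦ hnonneg j (Finset.mem_of_mem_erase hj)
  calc |(∏ j ∈ s.erase i, f j x) • f' i| = (∏ j ∈ s.erase i, f j x) * |f' i| := by
        rw [smul_eq_mul, abs_mul, abs_of_nonneg herase]
    _ ≤ (∏ j ∈ s.erase i, f j x) * (C i * f i x) := by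
        gcongr
        exact hf' i hi
    _ = C i * ∏ j ∈ s, f j x := by
        rw [← Finset.prod_erase_mul s _ hi]
        ring

variable {m : ι → ℕ} {c : ℝ}

lemma abs_deriv_prod_taylorExp_le (hm : ∀ i ∈ s, Even (m i)) (hc : exp (1 + c⁻¹) ≤ c)
    (a : ι → ℝ) (x : ℝ) :
    |deriv (fun z ↦ ∏ i ∈ s, taylorExp (m i) (a i * z)) x| ≤
      (∑ i ∈ s, c * |a i|) * ∏ i ∈ s, taylorExp (m i) (a i * x) := by
  refine abs_deriv_prod_le
    (fun i _ ↦ (hasDerivAt_taylorExp (m i) (a i * x)).comp x (hasDerivAt_const_mul (a i)))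
    (fun i hi ↦ (taylorExp_pos (hm i hi) _).le) fun i hi ↦ ?_
  rw [abs_mul, mul_right_comm]
  gcongr
  exact abs_taylorExp_sub_le (hm i hi) hc _

theorem p_plus_minus_deriv_nonneg_general {a : ι → ℝ} (hm : ∀ i ∈ s, Even (m i))
    (ha : ∑ i ∈ s, |a i| ≤ 1) (hc : exp (1 + c⁻¹) ≤ c) (x : ℝ) :
    0 ≤ ∏ i ∈ s, taylorExp (m i) (a i * x) -
        c⁻¹ * deriv (fun z ↦ ∏ i ∈ s, taylorExp (m i) (a i * z)) x ∧
    0 ≤ ∏ i ∈ s, taylorExp (m i) (a i * x) +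
        c⁻¹ * deriv (fun z ↦ ∏ i ∈ s, taylorExp (m i) (a i * z)) x := by
  have hc0 := pos_of_exp_one_add_inv_le hc
  set P : ℝ → ℝ := fun z ↦ ∏ i ∈ s, taylorExp (m i) (a i * z)
  have hP0 : 0 ≤ P x := Finset.prod_nonneg fun i hi ↦ (taylorExp_pos (hm i hi) _).le
  have hderiv : |deriv P x| ≤ c * P x :=
    calc |deriv P x| ≤ (∑ i ∈ s, c * |a i|) * P x := abs_deriv_prod_taylorExp_le hm hc a x
      _ = c * (∑ i ∈ s, |a i|) * P x := by rw [Finset.mul_sum]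
      _ ≤ c * 1 * P x := by gcongr
      _ = c * P x := by rw [mul_one]
  have habs : |c⁻¹ * deriv P x| ≤ P x := by
    rwa [abs_mul, abs_of_pos (inv_pos.2 hc0), inv_mul_le_iff₀ hc0]
  exact ⟨sub_nonneg.2 (le_of_abs_le habs), by linarith [neg_le_of_abs_le habs]⟩

end Prod

/-- For all positive integers `k, ℓ` and all real `x`, both
`p_{k,ℓ}(x) - 0.004 p'_{k,ℓ}(x) ≥ 0` and `p_{k,ℓ}(x) + 0.004 p'_{k,ℓ}(x) ≥ 0`. -/
theorem p_plus_minus_deriv_nonneg (k ℓ : ℕ) (hk : 0 < k) (hℓ : 0 < ℓ) (x : ℝ) :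
    0 ≤ pkl k ℓ x - 0.004 * deriv (pkl k ℓ) x ∧
    0 ≤ pkl k ℓ x + 0.004 * deriv (pkl k ℓ) x := by
  have hexp : exp (1 + (250 : ℝ)⁻¹) ≤ 250 :=
    calc exp (1 + (250 : ℝ)⁻¹) ≤ exp (1 + 1) := by gcongr; norm_num
      _ = exp 1 * exp 1 := exp_add 1 1
      _ ≤ 3 * 3 := by gcongr <;> exact exp_one_lt_three.le
      _ ≤ 250 := by norm_num
  have heven : ∀ j ∈ Finset.Icc 1 k, Even (2 ^ j * ℓ) := fun j hj ↦
    (even_two.pow_of_ne_zero (Nat.one_le_iff_ne_zero.1 (Finset.mem_Icc.1 hj).1)).mul_right ℓ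
  have hsum : ∑ _j ∈ Finset.Icc 1 k, |(k : ℝ)⁻¹| ≤ 1 := by
    simp [hk.ne']
  have hpkl : pkl k ℓ = fun z ↦ ∏ j ∈ Finset.Icc 1 k, taylorExp (2 ^ j * ℓ) ((k : ℝ)⁻¹ * z) := by
    funext z
    simp only [pkl, div_eq_inv_mul]
  rw [hpkl, show (0.004 : ℝ) = 250⁻¹ by norm_num]
  exact p_plus_minus_deriv_nonneg_general heven hsum hexp x
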